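/- arXiv:0802.1496 — 2 statements merged into one kernel-verified Lean document; each statement's English description precedes it below -/
import Mathlib

section
/- Let L be a Lie-like algebra^{2-nd} induced by a nonempty set S with plus annihilator L^{ann,+}. Then on the quotient vector space L/L^{ann,+} there is a well-defined bilinear bracket [x + L^{ann,+}, y + L^{ann,+}] := ⟨x,y⟩_k + L^{ann,+} for any k ∈ S (independent of the choice of k), and with this bracket L/L^{ann,+} is a Lie algebra: the bracket is anti-symmetric and satisfies the Jacobi identity. -/
/-- The plus annihilator of a Lie-like algebra^{2-nd}: the subspace spanned by
all elements `⟨x,y⟩_h + ⟨y,x⟩_k` with `x, y ∈ L` and `h, k ∈ S`. -/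
def likeAnnPlus2 (K : Type*) [Field K] {L : Type*} [AddCommGroup L] [Module K L]
    {S : Type*} (ang : S → L →ₗ[K] L →ₗ[K] L) : Submodule K L :=
  Submodule.span K {a : L | ∃ x y : L, ∃ h k : S, a = ang h x y + ang k y x}

/-!
Modulo the plus annihilator, `⟨x,y⟩_h = -⟨y,x⟩_k` for all `h` and `k`. Applying this twice shows
that the class of `⟨x,y⟩_k` does not depend on `k`. By the Jacobi-like identity, `⟨·,z⟩_l` carries a
generator `⟨x,y⟩_h + ⟨y,x⟩_k` to the sum of the two generators attached to `x, ⟨y,z⟩_l` and to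
`⟨x,z⟩_l, y`, so the bracket descends to the quotient. There the Jacobi-like identity is the Leibniz
rule, which for an antisymmetric bracket is the Jacobi identity.
-/

theorem jacobi_of_skew_of_leibniz {R M : Type*} [CommSemiring R] [AddCommGroup M] [Module R M]
    (b : M →ₗ[R] M →ₗ[R] M) (skew : ∀ u v, b u v = -b v u)
    (leibniz : ∀ u v w, b (b u v) w = b u (b v w) + b (b u w) v) (u v w : M) :
    b (b u v) w + b (b v w) u + b (b w u) v = 0 := by
  have outer : b u (b v w) = -b (b v w) u := skew u (b v w)
  have inner : b (b u w) v = -b (b w u) v := by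
    rw [skew u w, map_neg, LinearMap.neg_apply]
  rw [leibniz, outer, inner]
  abel

section LieLike

variable {R L S : Type*} [CommRing R] [AddCommGroup L] [Module R L]

/-- The Jacobi-like identity `⟨⟨x,y⟩_k, z⟩_h = ⟨x, ⟨y,z⟩_h⟩_k + ⟨⟨x,z⟩_h, y⟩_k` for a family of
bilinear operations `⟨x,y⟩_k = ang k x y`: every `⟨·,z⟩_h` is a derivation of every `⟨·,·⟩_k`. -/
def JacobiLikeIdentity (ang : S → L →ₗ[R] L →ₗ[R] L) : Prop :=
  ∀ (h k : S) (x y z : L), ang h (ang k x y) z = ang k x (ang h y z) + ang k (ang h x z) y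

/-- The plus annihilator of a family of bilinear operations on a module over a commutative ring,
used to develop the quotient bracket in this generality; over a field it is definitionally
`likeAnnPlus2`. -/
def plusAnnihilator (ang : S → L →ₗ[R] L →ₗ[R] L) : Submodule R L :=
  Submodule.span R {a : L | ∃ x y : L, ∃ h k : S, a = ang h x y + ang k y x}

namespace plusAnnihilator

theorem add_swap_mem (ang : S → L →ₗ[R] L →ₗ[R] L) (h k : S) (x y : L) :
    ang h x y + ang k y x ∈ plusAnnihilator ang :=
  Submodule.subset_span ⟨x, y, h, k, rfl⟩

theorem mkQ_apply_eq_neg_swap (ang : S → L →ₗ[R] L →ₗ[R] L) (h k : S) (x y : L) :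
    (plusAnnihilator ang).mkQ (ang h x y) = -(plusAnnihilator ang).mkQ (ang k y x) := by
  rw [eq_neg_iff_add_eq_zero, ← map_add, Submodule.mkQ_apply, Submodule.Quotient.mk_eq_zero]
  exact add_swap_mem ang h k x y

theorem mkQ_apply_eq (ang : S → L →ₗ[R] L →ₗ[R] L) (h k : S) (x y : L) :
    (plusAnnihilator ang).mkQ (ang h x y) = (plusAnnihilator ang).mkQ (ang k x y) :=
  (mkQ_apply_eq_neg_swap ang h k x y).trans (mkQ_apply_eq_neg_swap ang k k x y).symm

theorem apply_mem_of_mem_left {ang : S → L →ₗ[R] L →ₗ[R] L} (jac : JacobiLikeIdentity ang)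
    (l : S) {a : L} (ha : a ∈ plusAnnihilator ang) (z : L) :
    ang l a z ∈ plusAnnihilator ang := by
  suffices le_comap : plusAnnihilator ang ≤ (plusAnnihilator ang).comap ((ang l).flip z) from
    le_comap ha
  refine Submodule.span_le.2 ?_
  rintro _ ⟨x, y, h, k, rfl⟩
  have split : ang l (ang h x y + ang k y x) z =
      (ang h x (ang l y z) + ang k (ang l y z) x) +
        (ang h (ang l x z) y + ang k y (ang l x z)) := by
    rw [map_add, LinearMap.add_apply, jac l h x y z, jac l k y x z]
    abel
  change ang l (ang h x y + ang k y x) z ∈ plusAnnihilator ang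
  rw [split]
  exact add_mem (add_swap_mem ang h k _ _) (add_swap_mem ang h k _ _)

theorem isRefl_compr₂_mkQ (ang : S → L →ₗ[R] L →ₗ[R] L) (k : S) :
    ((ang k).compr₂ (plusAnnihilator ang).mkQ).IsRefl := fun x y hxy => by
  rw [LinearMap.compr₂_apply] at hxy ⊢
  rw [mkQ_apply_eq_neg_swap ang k k, hxy, neg_zero]

theorem le_ker_compr₂_mkQ {ang : S → L →ₗ[R] L →ₗ[R] L} (jac : JacobiLikeIdentity ang) (k : S) :
    plusAnnihilator ang ≤ ((ang k).compr₂ (plusAnnihilator ang).mkQ).ker := fun _ ha =>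
  LinearMap.ext fun z =>
    (Submodule.Quotient.mk_eq_zero _).2 (apply_mem_of_mem_left jac k ha z)

/-- The bracket induced by `⟨·,·⟩_k` on the quotient by the plus annihilator. The index `k` only
selects a representative: see `quotientBracket_mk`. -/
def quotientBracket {ang : S → L →ₗ[R] L →ₗ[R] L} (jac : JacobiLikeIdentity ang) (k : S) :
    (L ⧸ plusAnnihilator ang) →ₗ[R] (L ⧸ plusAnnihilator ang) →ₗ[R] (L ⧸ plusAnnihilator ang) :=
  (isRefl_compr₂_mkQ ang k).liftQ₂ _ _ (le_ker_compr₂_mkQ jac k)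

theorem quotientBracket_mk {ang : S → L →ₗ[R] L →ₗ[R] L} (jac : JacobiLikeIdentity ang)
    (k h : S) (x y : L) :
    quotientBracket jac k (Submodule.Quotient.mk x) (Submodule.Quotient.mk y) =
      Submodule.Quotient.mk (ang h x y) :=
  mkQ_apply_eq ang k h x y

theorem quotientBracket_skew {ang : S → L →ₗ[R] L →ₗ[R] L} (jac : JacobiLikeIdentity ang)
    (k : S) (u v : L ⧸ plusAnnihilator ang) :
    quotientBracket jac k u v = -quotientBracket jac k v u := by
  obtain ⟨x, rfl⟩ := Submodule.Quotient.mk_surjective _ u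
  obtain ⟨y, rfl⟩ := Submodule.Quotient.mk_surjective _ v
  exact mkQ_apply_eq_neg_swap ang k k x y

theorem quotientBracket_leibniz {ang : S → L →ₗ[R] L →ₗ[R] L} (jac : JacobiLikeIdentity ang)
    (k : S) (u v w : L ⧸ plusAnnihilator ang) :
    quotientBracket jac k (quotientBracket jac k u v) w =
      quotientBracket jac k u (quotientBracket jac k v w) +
        quotientBracket jac k (quotientBracket jac k u w) v := by
  obtain ⟨x, rfl⟩ := Submodule.Quotient.mk_surjective _ u
  obtain ⟨y, rfl⟩ := Submodule.Quotient.mk_surjective _ v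
  obtain ⟨z, rfl⟩ := Submodule.Quotient.mk_surjective _ w
  simp only [quotientBracket_mk jac k k, jac k k x y z, Submodule.Quotient.mk_add]

end plusAnnihilator

open plusAnnihilator in
theorem stmt_8_general [Nonempty S] (ang : S → L →ₗ[R] L →ₗ[R] L) (jac : JacobiLikeIdentity ang) :
    ∃ qbr : (L ⧸ plusAnnihilator ang) →ₗ[R] (L ⧸ plusAnnihilator ang) →ₗ[R]
        (L ⧸ plusAnnihilator ang),
      (∀ (k : S) (x y : L),
        qbr (Submodule.Quotient.mk x) (Submodule.Quotient.mk y)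
          = Submodule.Quotient.mk (ang k x y)) ∧
      (∀ u v : L ⧸ plusAnnihilator ang, qbr u v = -qbr v u) ∧
      (∀ u v w : L ⧸ plusAnnihilator ang,
        qbr (qbr u v) w + qbr (qbr v w) u + qbr (qbr w u) v = 0) := by
  obtain ⟨k⟩ := ‹Nonempty S›
  have skew := quotientBracket_skew jac k
  exact ⟨quotientBracket jac k, quotientBracket_mk jac k, skew,
    jacobi_of_skew_of_leibniz _ skew (quotientBracket_leibniz jac k)⟩

end LieLike

/-- On the quotient `L / L^{ann,+}` there is a well-defined bilinear
bracket `[x + L^{ann,+}, y + L^{ann,+}] = ⟨x,y⟩_k + L^{ann,+}` (independent of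
`k ∈ S`), making `L / L^{ann,+}` a Lie algebra: anti-symmetric and satisfying
the Jacobi identity. -/
theorem stmt_8 (K : Type*) [Field K] (L : Type*) [AddCommGroup L] [Module K L]
    (S : Type*) [Nonempty S]
    (ang : S → L →ₗ[K] L →ₗ[K] L)
    (leib : ∀ (h k : S) (x y z : L),
      ang h (ang k x y) z = ang k x (ang h y z) + ang k (ang h x z) y)
    (swap : ∀ (h k : S) (x y z : L),
      ang h (ang k x y) z = ang k (ang h x y) z) :
    ∃ qbr : (L ⧸ likeAnnPlus2 K ang) →ₗ[K] (L ⧸ likeAnnPlus2 K ang) →ₗ[K]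
        (L ⧸ likeAnnPlus2 K ang),
      (∀ (k : S) (x y : L),
        qbr (Submodule.Quotient.mk x) (Submodule.Quotient.mk y)
          = Submodule.Quotient.mk (ang k x y)) ∧
      (∀ u v : L ⧸ likeAnnPlus2 K ang, qbr u v = - qbr v u) ∧
      (∀ u v w : L ⧸ likeAnnPlus2 K ang,
        qbr (qbr u v) w + qbr (qbr v w) u + qbr (qbr w u) v = 0) :=
  stmt_8_general ang leib
end

section
/- Let L = L₀ ⊕ L₁ be a Lie-like superalgebra^{2-nd} induced by a nonempty set S with minus super annihilator L^{sann,−}. Then on the quotient vector space L/L^{sann,−}, graded by the images of L₀ and L₁, there is a well-defined bilinear operation ⟨x + L^{sann,−}, y + L^{sann,−}⟩ := ⟨x,y⟩_k + L^{sann,−} for any k ∈ S (independent of the choice of k), the operation respects the grading, and with this operation L/L^{sann,−} is a Leibniz superalgebra: ⟨⟨u,v⟩, w⟩ = ⟨u, ⟨v,w⟩⟩ + (−1)^{βγ}⟨⟨u,w⟩, v⟩ for homogeneous classes u, v, w of degrees α, β, γ. -/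
/-- The minus super annihilator of a Lie-like superalgebra^{2-nd}: the subspace
spanned by all `⟨x,y⟩_h − ⟨x,y⟩_k` with `x, y` homogeneous and `h, k ∈ S`. -/
def superAnnMinus2 (K : Type*) [Field K] {L : Type*} [AddCommGroup L] [Module K L]
    {S : Type*} (Lg : ZMod 2 → Submodule K L)
    (ang : S → L →ₗ[K] L →ₗ[K] L) : Submodule K L :=
  Submodule.span K {a : L | ∃ α β : ZMod 2, ∃ h k : S, ∃ x ∈ Lg α, ∃ y ∈ Lg β,
    a = ang h x y - ang k x y}

/-!
Modulo the annihilator `I` all brackets coincide, so they induce a single operation once `I` is a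
two-sided ideal. Bracketing `I` with `z` on the right stays in `I` because the exchange law gives
`⟨⟨x,y⟩_h - ⟨x,y⟩_h', z⟩_k = ⟨⟨x,y⟩_k, z⟩_h - ⟨⟨x,y⟩_k, z⟩_h'`. On the left, the Jacobi-like
identity writes `⟨z, ⟨x,y⟩_h - ⟨x,y⟩_h'⟩_k` as `⟨⟨z,x⟩_k, y⟩_h - ⟨⟨z,x⟩_k, y⟩_h'` minus a multiple
of `⟨⟨z,y⟩_h - ⟨z,y⟩_h', x⟩_k`, which the first case puts in `I`. The sign `(-1)^{βγ}` enters
only as a scalar coefficient `ε β γ`.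
-/

section MinusAnnihilator

variable {R L S ι : Type*} [CommRing R] [AddCommGroup L] [Module R L]

/-- The minus annihilator of a family of brackets `ang k` on a module with homogeneous components
`Lg i`, for an arbitrary index type `ι`: the submodule modulo which all the brackets coincide,
spanned as in the paper by differences on homogeneous elements. For `ι = ZMod 2` over a field it is
`superAnnMinus2`. -/
def minusAnnihilator (Lg : ι → Submodule R L) (ang : S → L →ₗ[R] L →ₗ[R] L) : Submodule R L :=
  Submodule.span R {a : L | ∃ α β : ι, ∃ h k : S, ∃ x ∈ Lg α, ∃ y ∈ Lg β,
    a = ang h x y - ang k x y}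

variable {Lg : ι → Submodule R L} {ang : S → L →ₗ[R] L →ₗ[R] L}

theorem bracket_sub_bracket_mem_minusAnnihilator (hLg : ⨆ i, Lg i = ⊤) (h k : S) (x y : L) :
    ang h x y - ang k x y ∈ minusAnnihilator Lg ang := by
  have hle : Submodule.map₂ (ang h - ang k) ⊤ ⊤ ≤ minusAnnihilator Lg ang := by
    simp only [← hLg, Submodule.map₂_iSup_left, Submodule.map₂_iSup_right, iSup_le_iff,
      Submodule.map₂_le]
    exact fun β α x hx y hy => Submodule.subset_span ⟨α, β, h, k, x, hx, y, hy, rfl⟩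
  exact hle (Submodule.apply_mem_map₂ _ Submodule.mem_top Submodule.mem_top)

theorem apply_mem_of_mem_minusAnnihilator {M N : Type*} [AddCommGroup M] [Module R M]
    [AddCommGroup N] [Module R N] {κ : Type*} {Mg : κ → Submodule R M} (hMg : ⨆ i, Mg i = ⊤)
    {B : L →ₗ[R] M →ₗ[R] N} {I : Submodule R N}
    (hB : ∀ (h k : S) (α β : ι) (γ : κ), ∀ x ∈ Lg α, ∀ y ∈ Lg β, ∀ z ∈ Mg γ,
      B (ang h x y - ang k x y) z ∈ I)
    {a : L} (ha : a ∈ minusAnnihilator Lg ang) (z : M) : B a z ∈ I := by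
  have hle : Submodule.map₂ B (minusAnnihilator Lg ang) ⊤ ≤ I := by
    simp only [← hMg, Submodule.map₂_iSup_right, iSup_le_iff, Submodule.map₂_le]
    intro γ a ha z hz
    suffices minusAnnihilator Lg ang ≤ I.comap (B.flip z) from this ha
    refine Submodule.span_le.mpr ?_
    rintro _ ⟨α, β, h, k, x, hx, y, hy, rfl⟩
    exact hB h k α β γ x hx y hy z hz
  exact hle (Submodule.apply_mem_map₂ B ha Submodule.mem_top)

theorem bracket_mem_minusAnnihilator_of_mem_left (hLg : ⨆ i, Lg i = ⊤)
    (hswap : ∀ (h k : S) (α β γ : ι), ∀ x ∈ Lg α, ∀ y ∈ Lg β, ∀ z ∈ Lg γ,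
      ang k (ang h x y) z = ang h (ang k x y) z)
    (k : S) {a : L} (ha : a ∈ minusAnnihilator Lg ang) (z : L) :
    ang k a z ∈ minusAnnihilator Lg ang := by
  refine apply_mem_of_mem_minusAnnihilator hLg (fun h h' α β γ x hx y hy z hz => ?_) ha z
  rw [map_sub, LinearMap.sub_apply, hswap h k α β γ x hx y hy z hz,
    hswap h' k α β γ x hx y hy z hz]
  exact bracket_sub_bracket_mem_minusAnnihilator hLg h h' (ang k x y) z

theorem bracket_mem_minusAnnihilator_of_mem_right (hLg : ⨆ i, Lg i = ⊤) {ε : ι → ι → R}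
    (hjac : ∀ (h k : S) (α β γ : ι), ∀ x ∈ Lg α, ∀ y ∈ Lg β, ∀ z ∈ Lg γ,
      ang k (ang h x y) z = ang h x (ang k y z) + ε β γ • ang h (ang k x z) y)
    (hswap : ∀ (h k : S) (α β γ : ι), ∀ x ∈ Lg α, ∀ y ∈ Lg β, ∀ z ∈ Lg γ,
      ang k (ang h x y) z = ang h (ang k x y) z)
    (k : S) {a : L} (ha : a ∈ minusAnnihilator Lg ang) (z : L) :
    ang k z a ∈ minusAnnihilator Lg ang := by
  refine apply_mem_of_mem_minusAnnihilator (B := (ang k).flip) hLg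
    (fun h h' α β γ x hx y hy z hz => ?_) ha z
  have hjac_sub : ang k z (ang h x y - ang h' x y) =
      (ang h (ang k z x) y - ang h' (ang k z x) y) -
        ε α β • ang k (ang h z y - ang h' z y) x := by
    rw [hjac k h γ α β z hz x hx y hy, hjac k h' γ α β z hz x hx y hy]
    simp only [map_sub, LinearMap.sub_apply, smul_sub]
    abel
  rw [LinearMap.flip_apply, hjac_sub]
  exact sub_mem (bracket_sub_bracket_mem_minusAnnihilator hLg h h' (ang k z x) y)
    (Submodule.smul_mem _ _ (bracket_mem_minusAnnihilator_of_mem_left hLg hswap k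
      (bracket_sub_bracket_mem_minusAnnihilator hLg h h' z y) x))

theorem exists_bracket_quotient_minusAnnihilator [Nonempty S] (hLg : ⨆ i, Lg i = ⊤)
    {ε : ι → ι → R}
    (hjac : ∀ (h k : S) (α β γ : ι), ∀ x ∈ Lg α, ∀ y ∈ Lg β, ∀ z ∈ Lg γ,
      ang k (ang h x y) z = ang h x (ang k y z) + ε β γ • ang h (ang k x z) y)
    (hswap : ∀ (h k : S) (α β γ : ι), ∀ x ∈ Lg α, ∀ y ∈ Lg β, ∀ z ∈ Lg γ,
      ang k (ang h x y) z = ang h (ang k x y) z) :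
    ∃ qang : (L ⧸ minusAnnihilator Lg ang) →ₗ[R] (L ⧸ minusAnnihilator Lg ang) →ₗ[R]
        (L ⧸ minusAnnihilator Lg ang),
      ∀ (k : S) (x y : L), qang (Submodule.Quotient.mk x) (Submodule.Quotient.mk y) =
        Submodule.Quotient.mk (ang k x y) := by
  obtain ⟨k₀⟩ := ‹Nonempty S›
  set I := minusAnnihilator Lg ang
  let B : L →ₗ[R] L →ₗ[R] L ⧸ I := (ang k₀).compr₂ I.mkQ
  have hleft : I ≤ B.ker := fun a ha => LinearMap.ext fun z =>
    (Submodule.Quotient.mk_eq_zero I).mpr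
      (bracket_mem_minusAnnihilator_of_mem_left hLg hswap k₀ ha z)
  have hright : I ≤ B.flip.ker := fun a ha => LinearMap.ext fun z =>
    (Submodule.Quotient.mk_eq_zero I).mpr
      (bracket_mem_minusAnnihilator_of_mem_right hLg hjac hswap k₀ ha z)
  refine ⟨B.liftQ₂ I I hleft hright, fun k x y => ?_⟩
  rw [LinearMap.liftQ₂_mk]
  exact (Submodule.Quotient.eq I).mpr (bracket_sub_bracket_mem_minusAnnihilator hLg k₀ k x y)

end MinusAnnihilator

theorem stmt_18_general {R L S ι : Type*} [CommRing R] [AddCommGroup L] [Module R L] [Nonempty S]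
    [Add ι] (Lg : ι → Submodule R L) (hLg : ⨆ i, Lg i = ⊤) (ε : ι → ι → R)
    (ang : S → L →ₗ[R] L →ₗ[R] L)
    (hgrade : ∀ (k : S) (α β : ι), ∀ x ∈ Lg α, ∀ y ∈ Lg β, ang k x y ∈ Lg (α + β))
    (hjac : ∀ (h k : S) (α β γ : ι), ∀ x ∈ Lg α, ∀ y ∈ Lg β, ∀ z ∈ Lg γ,
      ang k (ang h x y) z = ang h x (ang k y z) + ε β γ • ang h (ang k x z) y)
    (hswap : ∀ (h k : S) (α β γ : ι), ∀ x ∈ Lg α, ∀ y ∈ Lg β, ∀ z ∈ Lg γ,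
      ang k (ang h x y) z = ang h (ang k x y) z) :
    ∃ qang : (L ⧸ minusAnnihilator Lg ang) →ₗ[R] (L ⧸ minusAnnihilator Lg ang) →ₗ[R]
        (L ⧸ minusAnnihilator Lg ang),
      (∀ (k : S) (x y : L), qang (Submodule.Quotient.mk x) (Submodule.Quotient.mk y) =
        Submodule.Quotient.mk (ang k x y)) ∧
      (∀ (α β : ι), ∀ u ∈ (Lg α).map (minusAnnihilator Lg ang).mkQ,
        ∀ v ∈ (Lg β).map (minusAnnihilator Lg ang).mkQ,
          qang u v ∈ (Lg (α + β)).map (minusAnnihilator Lg ang).mkQ) ∧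
      (∀ (α β γ : ι), ∀ u ∈ (Lg α).map (minusAnnihilator Lg ang).mkQ,
        ∀ v ∈ (Lg β).map (minusAnnihilator Lg ang).mkQ,
        ∀ w ∈ (Lg γ).map (minusAnnihilator Lg ang).mkQ,
          qang (qang u v) w = qang u (qang v w) + ε β γ • qang (qang u w) v) := by
  obtain ⟨qang, hq⟩ := exists_bracket_quotient_minusAnnihilator hLg hjac hswap
  obtain ⟨k⟩ := ‹Nonempty S›
  refine ⟨qang, hq, ?_, ?_⟩
  · rintro α β _ ⟨x, hx, rfl⟩ _ ⟨y, hy, rfl⟩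
    exact ⟨ang k x y, hgrade k α β x hx y hy, (hq k x y).symm⟩
  · rintro α β γ _ ⟨x, hx, rfl⟩ _ ⟨y, hy, rfl⟩ _ ⟨z, hz, rfl⟩
    simp only [Submodule.mkQ_apply, hq k, hjac k k α β γ x hx y hy z hz,
      Submodule.Quotient.mk_add, Submodule.Quotient.mk_smul]

/-- On `L / L^{sann,−}`, graded by the images of `L₀` and `L₁`,
there is a well-defined bilinear operation `⟨x̄, ȳ⟩ = ⟨x,y⟩_k + L^{sann,−}`
(independent of `k ∈ S`) which respects the grading and makes the quotient a
Leibniz superalgebra: `⟨⟨u,v⟩, w⟩ = ⟨u, ⟨v,w⟩⟩ + (−1)^{βγ}⟨⟨u,w⟩, v⟩` on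
homogeneous classes of degrees `α, β, γ`. -/
theorem stmt_18 (K : Type*) [Field K] (L : Type*) [AddCommGroup L] [Module K L]
    (S : Type*) [Nonempty S]
    (Lg : ZMod 2 → Submodule K L) (hdec : IsCompl (Lg 0) (Lg 1))
    (ang : S → L →ₗ[K] L →ₗ[K] L)
    (hgrade : ∀ (k : S) (α β : ZMod 2), ∀ x ∈ Lg α, ∀ y ∈ Lg β,
      ang k x y ∈ Lg (α + β))
    (hjac : ∀ (h k : S) (α β γ : ZMod 2), ∀ x ∈ Lg α, ∀ y ∈ Lg β, ∀ z ∈ Lg γ,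
      ang k (ang h x y) z
        = ang h x (ang k y z) + ((-1 : K) ^ (β.val * γ.val)) • ang h (ang k x z) y)
    (hswap : ∀ (h k : S) (α β γ : ZMod 2), ∀ x ∈ Lg α, ∀ y ∈ Lg β, ∀ z ∈ Lg γ,
      ang k (ang h x y) z = ang h (ang k x y) z) :
    ∃ qang : (L ⧸ superAnnMinus2 K Lg ang) →ₗ[K] (L ⧸ superAnnMinus2 K Lg ang) →ₗ[K]
        (L ⧸ superAnnMinus2 K Lg ang),
      (∀ (k : S) (x y : L),
        qang (Submodule.Quotient.mk x) (Submodule.Quotient.mk y)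
          = Submodule.Quotient.mk (ang k x y)) ∧
      (∀ (α β : ZMod 2),
        ∀ u ∈ (Lg α).map (superAnnMinus2 K Lg ang).mkQ,
        ∀ v ∈ (Lg β).map (superAnnMinus2 K Lg ang).mkQ,
          qang u v ∈ (Lg (α + β)).map (superAnnMinus2 K Lg ang).mkQ) ∧
      (∀ (α β γ : ZMod 2),
        ∀ u ∈ (Lg α).map (superAnnMinus2 K Lg ang).mkQ,
        ∀ v ∈ (Lg β).map (superAnnMinus2 K Lg ang).mkQ,
        ∀ w ∈ (Lg γ).map (superAnnMinus2 K Lg ang).mkQ,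
          qang (qang u v) w
            = qang u (qang v w)
              + ((-1 : K) ^ (β.val * γ.val)) • qang (qang u w) v) := by
  have hLg : ⨆ i, Lg i = ⊤ :=
    top_le_iff.mp (hdec.sup_eq_top ▸ sup_le (le_iSup Lg 0) (le_iSup Lg 1))
  exact stmt_18_general Lg hLg (fun β γ => (-1 : K) ^ (β.val * γ.val)) ang hgrade hjac hswap
end
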